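/- arXiv:0802.2554 — 6 statements merged into one kernel-verified Lean document; each statement's English description precedes it below -/
import Mathlib

section
/- Let F be a free non-abelian group and let H ≤ F be a cyclic subgroup. Then there exists a free non-abelian subgroup F̃ ≤ F such that F̃ ∩ H is trivial. -/
theorem FreeGroup.disjoint_closure_of_image {α : Type*} {s t : Set α} (hst : Disjoint s t) :
    Disjoint (Subgroup.closure (FreeGroup.of '' s)) (Subgroup.closure (FreeGroup.of '' t)) := by
  classical
  rw [Subgroup.disjoint_def]
  intro x hxs hxt
  let r : FreeGroup α →* FreeGroup α :=
    FreeGroup.lift fun i => if i ∈ s then FreeGroup.of i else 1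
  have hs : Subgroup.closure (FreeGroup.of '' s) ≤ r.eqLocus (MonoidHom.id _) := by
    rw [Subgroup.closure_le]
    rintro _ ⟨i, hi, rfl⟩
    change r (FreeGroup.of i) = FreeGroup.of i
    simp [r, hi]
  have ht : Subgroup.closure (FreeGroup.of '' t) ≤ r.ker := by
    rw [Subgroup.closure_le]
    rintro _ ⟨i, hi, rfl⟩
    simp [r, MonoidHom.mem_ker, hst.notMem_of_mem_right hi]
  exact (hs hxs : r x = x).symm.trans (ht hxt)

theorem FreeGroup.of_mul_of_ne {α : Type*} {i j : α} (hij : i ≠ j) :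
    FreeGroup.of i * FreeGroup.of j ≠ FreeGroup.of j * FreeGroup.of i := by
  classical
  intro h
  have := congrArg FreeGroup.toWord h
  simp [FreeGroup.of, FreeGroup.reduce, hij] at this

/-- The action of permutations of `α` on the free group on `α`. -/
def FreeGroup.permAut (α : Type*) : Equiv.Perm α →* MulAut (FreeGroup α) where
  toFun := FreeGroup.freeGroupCongr
  map_one' := FreeGroup.freeGroupCongr_refl
  map_mul' e f := (FreeGroup.freeGroupCongr_trans f e).symm

/-- For distinct basis elements `a` and `b`, the conjugates `aⁱ b a⁻ⁱ` are free generators. -/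
theorem FreeGroupBasis.injective_lift_conj {ι G : Type*} [Group G] (B : FreeGroupBasis ι G)
    {a b : ι} (hab : a ≠ b) :
    Function.Injective (FreeGroup.lift fun i : ℤ => B a ^ i * B b * (B a ^ i)⁻¹) := by
  classical
  let ψ : G →* FreeGroup ℤ ⋊[FreeGroup.permAut ℤ] Equiv.Perm ℤ :=
    B.lift fun x => if x = a then SemidirectProduct.inr (Equiv.addRight 1)
      else SemidirectProduct.inl (FreeGroup.of 0)
  have hcomp : ψ.comp (FreeGroup.lift fun i : ℤ => B a ^ i * B b * (B a ^ i)⁻¹) =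
      SemidirectProduct.inl := by
    ext1 i
    have ha : ψ (B a) = SemidirectProduct.inr (Equiv.addRight 1) := by simp [ψ]
    have hb : ψ (B b) = SemidirectProduct.inl (FreeGroup.of 0) := by simp [ψ, hab.symm]
    simp only [MonoidHom.comp_apply, FreeGroup.lift_apply_of, map_mul, map_inv, map_zpow, ha, hb]
    rw [← map_zpow, ← map_inv, ← SemidirectProduct.inl_aut]
    simp [FreeGroup.permAut]
  refine Function.Injective.of_comp (f := ψ) ?_
  rw [← MonoidHom.coe_comp, hcomp]
  exact SemidirectProduct.inl_injective

theorem Subgroup.disjoint_or_disjoint_of_isCyclic {G : Type*} [Group G] [IsMulTorsionFree G]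
    {A B H : Subgroup G} (hAB : Disjoint A B) (hH : IsCyclic H) :
    Disjoint A H ∨ Disjoint B H := by
  obtain ⟨h, rfl⟩ := (Subgroup.isCyclic_iff_exists_zpowers_eq_top H).1 hH
  simp only [Subgroup.disjoint_def]
  by_contra! hcon
  obtain ⟨⟨x, hxA, ⟨m, rfl⟩, hx⟩, ⟨y, hyB, ⟨n, rfl⟩, hy⟩⟩ := hcon
  have hmn : h ^ (m * n) = 1 := Subgroup.disjoint_def.1 hAB
    (by rw [zpow_mul]; exact A.zpow_mem hxA n) (by rw [zpow_mul']; exact B.zpow_mem hyB m)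
  rcases eq_or_ne h 1 with rfl | hne
  · simp at hx
  · rcases mul_eq_zero.1 ((IsMulTorsionFree.zpow_eq_one_iff_right hne).1 hmn) with rfl | rfl
    · simp at hx
    · simp at hy

theorem IsFreeGroup.isMulTorsionFree (G : Type*) [Group G] [IsFreeGroup G] :
    IsMulTorsionFree G :=
  Function.Injective.isMulTorsionFree (IsFreeGroup.toFreeGroup G).toMonoidHom
    (IsFreeGroup.toFreeGroup G).injective

theorem IsFreeGroup.nontrivial_generators {G : Type*} [Group G] [IsFreeGroup G]
    (hG : ∃ a b : G, a * b ≠ b * a) : Nontrivial (IsFreeGroup.Generators G) := by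
  by_contra hsub
  rw [not_nontrivial_iff_subsingleton] at hsub
  obtain ⟨a, b, hab⟩ := hG
  have hcyc : IsCyclic (FreeGroup (IsFreeGroup.Generators G)) := by
    rcases isEmpty_or_nonempty (IsFreeGroup.Generators G) with _ | ⟨⟨x⟩⟩
    · infer_instance
    · have := uniqueOfSubsingleton x
      infer_instance
  refine hab ((IsFreeGroup.toFreeGroup G).injective ?_)
  rw [map_mul, map_mul]
  exact hcyc.isMulCommutative.is_comm.comm _ _

/-- Let `F` be a free non-abelian group and `H ≤ F` a cyclic subgroup.
Then there exists a free non-abelian subgroup `F̃ ≤ F` such that `F̃ ∩ H` is trivial. -/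
theorem stmt_1 (F : Type*) [Group F] [IsFreeGroup F]
    (hF : ∃ a b : F, a * b ≠ b * a)
    (H : Subgroup F) (hH : IsCyclic H) :
    ∃ Ft : Subgroup F, IsFreeGroup Ft ∧ (∃ a b : Ft, a * b ≠ b * a) ∧ Ft ⊓ H = ⊥ := by
  have := IsFreeGroup.isMulTorsionFree F
  obtain ⟨a, b, hab⟩ := (IsFreeGroup.nontrivial_generators hF).exists_pair_ne
  let θ : FreeGroup ℤ →* F := FreeGroup.lift fun i : ℤ =>
    IsFreeGroup.basis F a ^ i * IsFreeGroup.basis F b * (IsFreeGroup.basis F a ^ i)⁻¹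
  have hθ : Function.Injective θ := (IsFreeGroup.basis F).injective_lift_conj hab
  let A (s : Set ℤ) : Subgroup F := (Subgroup.closure (FreeGroup.of '' s)).map θ
  have hA : ∀ s : Set ℤ, s.Nontrivial → ∃ x y : A s, x * y ≠ y * x := by
    rintro s ⟨i, hi, j, hj, hij⟩
    have hmem : ∀ k ∈ s, θ (FreeGroup.of k) ∈ A s := fun k hk =>
      Subgroup.mem_map_of_mem θ (Subgroup.subset_closure ⟨k, hk, rfl⟩)
    refine ⟨⟨_, hmem i hi⟩, ⟨_, hmem j hj⟩, fun h => FreeGroup.of_mul_of_ne hij (hθ ?_)⟩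
    simpa using congrArg Subtype.val h
  have hdisj : Disjoint (A {0, 1}) (A {2, 3}) :=
    Subgroup.disjoint_map hθ (FreeGroup.disjoint_closure_of_image (by simp))
  rcases Subgroup.disjoint_or_disjoint_of_isCyclic hdisj hH with h | h
  · exact ⟨_, inferInstance, hA _ (Set.nontrivial_pair (by norm_num)), h.eq_bot⟩
  · exact ⟨_, inferInstance, hA _ (Set.nontrivial_pair (by norm_num)), h.eq_bot⟩
end

section
/- Let F be a free non-abelian group and let φ : F → G₁ × G₂ × ⋯ × Gₙ be a homomorphism into a finite direct product of groups. If for every i ∈ {1,…,n} the composition φᵢ of φ with the projection onto Gᵢ has a non-trivial kernel, then φ has a non-trivial kernel. -/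
namespace FreeGroup

variable {α : Type*}

/-- Conjugating a reduced word by a letter that cancels at neither end yields a reduced word. -/
theorem IsReduced.cons_append_singleton {L : List (α × Bool)} (hL : IsReduced L) (hne : L ≠ [])
    {z : α} {β : Bool} (hhead : ∀ p ∈ L.head?, p ≠ (z, !β)) (hlast : ∀ p ∈ L.getLast?, p ≠ (z, β)) :
    IsReduced ((z, β) :: L ++ [(z, !β)]) := by
  rw [IsReduced, List.isChain_append, List.isChain_cons]
  refine ⟨⟨fun p hp h => ?_, hL⟩, List.isChain_singleton _, fun p hp q hq h => ?_⟩
  · have := hhead p hp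
    rcases p with ⟨c, d⟩
    cases d <;> cases β <;> simp_all
  · rw [List.getLast?_cons_of_ne_nil hne] at hp
    have := hlast p hp
    rcases p with ⟨c, d⟩
    simp only [List.head?_cons, Option.mem_def, Option.some.injEq] at hq
    subst hq
    cases d <;> cases β <;> simp_all

/-- If the free group has a second generator `y`, every nontrivial element is conjugate to one
whose reduced word begins with a power of `x` and ends with its inverse. -/
theorem exists_conj_eq_mk_isReduced {x y : α} (hxy : x ≠ y) {a : FreeGroup α} (ha : a ≠ 1) :
    ∃ (g : FreeGroup α) (β : Bool) (L : List (α × Bool)),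
      g * a * g⁻¹ = mk ((x, β) :: L ++ [(x, !β)]) ∧ IsReduced ((x, β) :: L ++ [(x, !β)]) := by
  classical
  obtain ⟨L, rfl, hL⟩ : ∃ L, mk L = a ∧ IsReduced L := ⟨a.toWord, mk_toWord, isReduced_toWord⟩
  have hne : L ≠ [] := by rintro rfl; exact ha rfl
  have conj (z : α) (β : Bool) (L : List (α × Bool)) :
      mk [(z, β)] * mk L * (mk [(z, β)])⁻¹ = mk ((z, β) :: L ++ [(z, !β)]) := by
    simp [inv_mk, mul_mk, invRev]
  have direct (β : Bool) (hh : L.head hne ≠ (x, !β)) (hl : L.getLast hne ≠ (x, β)) :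
      ∃ (g : FreeGroup α) (β : Bool) (L' : List (α × Bool)),
        g * mk L * g⁻¹ = mk ((x, β) :: L' ++ [(x, !β)]) ∧
          IsReduced ((x, β) :: L' ++ [(x, !β)]) :=
    ⟨_, β, L, conj x β L, hL.cons_append_singleton hne
      (by simpa [List.head?_eq_some_head hne] using hh)
      (by simpa [List.getLast?_eq_some_getLast hne] using hl)⟩
  have indirect (β : Bool) (hh : L.head hne ≠ (y, !β)) (hl : L.getLast hne ≠ (y, β)) :
      ∃ (g : FreeGroup α) (β : Bool) (L' : List (α × Bool)),
        g * mk L * g⁻¹ = mk ((x, β) :: L' ++ [(x, !β)]) ∧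
          IsReduced ((x, β) :: L' ++ [(x, !β)]) := by
    refine ⟨mk [(x, true)] * mk [(y, β)], true, (y, β) :: L ++ [(y, !β)], ?_, ?_⟩
    · rw [← conj, ← conj]
      group
    · refine IsReduced.cons_append_singleton (hL.cons_append_singleton hne
        (by simpa [List.head?_eq_some_head hne] using hh)
        (by simpa [List.getLast?_eq_some_getLast hne] using hl)) (by simp) ?_ ?_
      · simp [hxy.symm]
      · rw [List.getLast?_concat]
        simp [hxy.symm]
  by_cases h : (L.head hne).1 = x ∧ (L.getLast hne).1 = x
  · refine indirect true ?_ ?_ <;> intro h' <;> simp_all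
  · by_cases hh : (L.head hne).1 = x
    · refine direct (L.head hne).2 (fun h' => ?_) fun h' => h ⟨hh, congrArg Prod.fst h'⟩
      exact Bool.not_ne_self _ (congrArg Prod.snd h').symm
    · refine direct (!(L.getLast hne).2) (fun h' => hh (congrArg Prod.fst h')) fun h' => ?_
      exact Bool.not_ne_self _ (congrArg Prod.snd h').symm

/-- In a free group with two distinct generators, any two nontrivial elements have conjugates
that do not commute. -/
theorem exists_conj_not_commute {x y : α} (hxy : x ≠ y) {a b : FreeGroup α}
    (ha : a ≠ 1) (hb : b ≠ 1) : ∃ g h : FreeGroup α, ¬ Commute (g * a * g⁻¹) (h * b * h⁻¹) := by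
  classical
  obtain ⟨g, β, L, hg, hL⟩ := exists_conj_eq_mk_isReduced hxy ha
  obtain ⟨h, γ, M, hh, hM⟩ := exists_conj_eq_mk_isReduced hxy.symm hb
  refine ⟨g, h, fun hc => ?_⟩
  rw [hg, hh, Commute, SemiconjBy, mul_mk, mul_mk] at hc
  have reduced_append {z w : α} (hzw : z ≠ w) {β γ : Bool} {L M : List (α × Bool)}
      (hL : IsReduced ((z, β) :: L ++ [(z, !β)])) (hM : IsReduced ((w, γ) :: M ++ [(w, !γ)])) :
      IsReduced (((z, β) :: L ++ [(z, !β)]) ++ ((w, γ) :: M ++ [(w, !γ)])) := by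
    refine List.isChain_append.2 ⟨hL, hM, ?_⟩
    rw [List.getLast?_concat]
    simp [hzw]
  have := congrArg toWord hc
  rw [toWord_mk, toWord_mk, (reduced_append hxy hL hM).reduce_eq,
    (reduced_append hxy.symm hM hL).reduce_eq] at this
  simp [hxy] at this

theorem commute_of_subsingleton [Subsingleton α] (a b : FreeGroup α) : Commute a b := by
  induction a using FreeGroup.induction_on with
  | C1 => exact Commute.one_left b
  | of x =>
    induction b using FreeGroup.induction_on with
    | C1 => exact Commute.one_right _
    | of y => rw [Subsingleton.elim x y]
    | inv_of y h => exact h.inv_right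
    | mul b c hb hc => exact hb.mul_right hc
  | inv_of x h => exact h.inv_left
  | mul a c ha hc => exact ha.mul_left hc

end FreeGroup

/-- Nontrivial normal subgroups of a non-abelian free group intersect nontrivially. -/
theorem IsFreeGroup.not_disjoint_of_normal {F : Type*} [Group F] [IsFreeGroup F]
    (hF : ∃ a b : F, a * b ≠ b * a) {M N : Subgroup F} [hM : M.Normal] [hN : N.Normal]
    (hM' : M ≠ ⊥) (hN' : N ≠ ⊥) : ¬ Disjoint M N := by
  intro hMN
  let e := IsFreeGroup.toFreeGroup F
  obtain ⟨x, y, hxy⟩ : ∃ x y : IsFreeGroup.Generators F, x ≠ y := by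
    by_contra! hsub
    have : Subsingleton (IsFreeGroup.Generators F) := ⟨hsub⟩
    obtain ⟨a, b, hab⟩ := hF
    apply hab
    apply e.injective
    simpa using (FreeGroup.commute_of_subsingleton (e a) (e b)).eq
  obtain ⟨a, haM, ha⟩ := M.bot_or_exists_ne_one.resolve_left hM'
  obtain ⟨b, hbN, hb⟩ := N.bot_or_exists_ne_one.resolve_left hN'
  obtain ⟨g, h, hgh⟩ := FreeGroup.exists_conj_not_commute hxy
    (e.map_ne_one_iff.2 ha) (e.map_ne_one_iff.2 hb)
  apply hgh
  have := (Subgroup.commute_of_normal_of_disjoint M N hM hN hMN _ _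
    (hM.conj_mem a haM (e.symm g)) (hN.conj_mem b hbN (e.symm h))).map e
  simpa using this

/-- Finitely many nontrivial normal subgroups of a non-abelian free group have nontrivial
intersection. -/
theorem IsFreeGroup.biInf_finset_ne_bot {F ι : Type*} [Group F] [IsFreeGroup F]
    (hF : ∃ a b : F, a * b ≠ b * a) (s : Finset ι) (N : ι → Subgroup F)
    (hN : ∀ i, (N i).Normal) (hN' : ∀ i, N i ≠ ⊥) : ⨅ i ∈ s, N i ≠ ⊥ := by
  classical
  induction s using Finset.induction_on with
  | empty =>
    obtain ⟨a, b, hab⟩ := hF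
    have : Nontrivial F := ⟨_, _, hab⟩
    simp
  | insert i s _ ih =>
    rw [Finset.iInf_insert]
    have := hN i
    have : (⨅ j ∈ s, N j).Normal :=
      Subgroup.normal_iInf_normal fun j => Subgroup.normal_iInf_normal fun _ => hN j
    exact fun hbot => IsFreeGroup.not_disjoint_of_normal hF (hN' i) ih (disjoint_iff.2 hbot)

/-- Let `F` be a free non-abelian group and
`φ : F → G₁ × ⋯ × Gₙ` a homomorphism into a finite direct product of groups.
If every composition with a projection has non-trivial kernel, then `φ` has
non-trivial kernel. -/
theorem stmt_2 (F : Type*) [Group F] [IsFreeGroup F]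
    (hF : ∃ a b : F, a * b ≠ b * a)
    (n : ℕ) (G : Fin n → Type*) [∀ i, Group (G i)]
    (φ : F →* ∀ i, G i)
    (h : ∀ i, ((Pi.evalMonoidHom G i).comp φ).ker ≠ ⊥) :
    φ.ker ≠ ⊥ := by
  have key := IsFreeGroup.biInf_finset_ne_bot hF Finset.univ _ (fun _ => MonoidHom.normal_ker _) h
  convert key using 1
  ext a
  simp [Subgroup.mem_iInf, MonoidHom.mem_ker, funext_iff]
end

section
/- Let 𝖷 = (X_1, X_2, …) be a sequence of nonempty finite sets, let T be a spherically homogeneous rooted subtree of 𝖷^* and let g be an automorphism of the rooted tree 𝖷^*. Then lim_{n→∞} θ_{g,T}(n)/|L_n| = m_T(Σ_g ∩ ∂T), where L_n is the n-th level of T and Σ_g is the set of g-singular points of 𝖷^ω. -/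
/-! Trees of words over a sequence `𝖷 = (X 0, X 1, …)` of alphabets, realized via
their boundary `𝖷^ω = X 0 × X 1 × ⋯`. -/

/-- Finite words of length `m` over the sequence of alphabets `X` (the `m`-th level `𝖷^m`
of the tree of words `𝖷^*`). -/
abbrev FWord (X : ℕ → Type*) (m : ℕ) := (i : Fin m) → X i

/-- The boundary `𝖷^ω` of the tree of words `𝖷^*`. -/
abbrev FBoundary (X : ℕ → Type*) := (i : ℕ) → X i

/-- The sequence `w ∈ 𝖷^ω` extends the finite word `v` (`v` is a beginning of `w`). -/
def FExtends {X : ℕ → Type*} {m : ℕ} (w : FBoundary X) (v : FWord X m) : Prop :=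
  ∀ i : Fin m, w i = v i

/-- The beginning of length `m` of a sequence `w ∈ 𝖷^ω`. -/
def wprefix {X : ℕ → Type*} (w : FBoundary X) (m : ℕ) : FWord X m := fun i => w i

/-- A permutation of the boundary `𝖷^ω` is (induced by) an automorphism of the rooted tree
`𝖷^*` if and only if for all `n` it preserves the relation "agree on the first `n` letters"
(two sequences have the same length-`n` beginning iff their images do). -/
def IsTreeAut {X : ℕ → Type*} (f : Equiv.Perm (FBoundary X)) : Prop :=
  ∀ (n : ℕ) (w w' : FBoundary X),
    (∀ i, i < n → w i = w' i) ↔ (∀ i, i < n → f w i = f w' i)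

/-- The automorphism group of the rooted tree `𝖷^*`, realized as the group of those
permutations of the boundary `𝖷^ω` induced by tree automorphisms. -/
def treeAut (X : ℕ → Type*) : Subgroup (Equiv.Perm (FBoundary X)) where
  carrier := {f | IsTreeAut f}
  one_mem' := by intro n w w'; simp
  mul_mem' := by
    intro f g hf hg n w w'
    have h := (hg n w w').trans (hf n (g w) (g w'))
    simpa using h
  inv_mem' := by
    intro f hf n w w'
    have h := (hf n (f⁻¹ w) (f⁻¹ w')).symm
    simpa using h

/-- The restriction `f|_v` of `f` to the subtree at the vertex `v` is trivial:
`f` maps `v·u` to `(f v)·u` for every `u`. -/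
def RestrictTrivial {X : ℕ → Type*} (f : Equiv.Perm (FBoundary X)) {m : ℕ}
    (v : FWord X m) : Prop :=
  ∀ w : FBoundary X, FExtends w v → ∀ i, m ≤ i → f w i = w i

/-- The set `Σ_f` of `f`-singular points of `𝖷^ω`: the points `w` such that `f|_v ≠ id`
for every beginning `v` of `w`. -/
def singularSet {X : ℕ → Type*} (f : Equiv.Perm (FBoundary X)) : Set (FBoundary X) :=
  {w | ∀ m : ℕ, ¬ RestrictTrivial f (wprefix w m)}

/-- The parent of a vertex of `𝖷^*` (drop the last letter). -/
def wparent {X : ℕ → Type*} {n : ℕ} (v : FWord X (n + 1)) : FWord X n :=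
  fun i => v ⟨i, Nat.lt_succ_of_lt i.2⟩

/-- Append one letter to a finite word. -/
def wsnoc {X : ℕ → Type*} {n : ℕ} (v : FWord X n) (x : X n) : FWord X (n + 1) :=
  fun i => if h : (i : ℕ) < n then v ⟨i, h⟩
    else cast (congrArg X (Nat.le_antisymm (Nat.not_lt.mp h) (Nat.lt_succ_iff.mp i.2))) x

/-- The relative growth function `θ_{f,T}(n)`: the number of vertices `v` of the `n`-th
level of the rooted subtree `T` with `f|_v ≠ id`. -/
noncomputable def thetaRel {X : ℕ → Type*} (f : Equiv.Perm (FBoundary X))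
    (T : ∀ n, Set (FWord X n)) (n : ℕ) : ℕ :=
  {v ∈ T n | ¬ RestrictTrivial f v}.ncard

/-- The boundary `∂T` of a rooted subtree `T ⊆ 𝖷^*` (given by its level sets). -/
def boundaryOf {X : ℕ → Type*} (T : ∀ n, Set (FWord X n)) : Set (FBoundary X) :=
  {w | ∀ n, wprefix w n ∈ T n}

/-- Extend a finite word to a boundary point by an arbitrary fixed tail. -/
noncomputable def wext {X : ℕ → Type*} [∀ i, Nonempty (X i)] {m : ℕ} (v : FWord X m) :
    FBoundary X :=
  fun i => if h : i < m then v ⟨i, h⟩ else Classical.arbitrary (X i)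

/-- The image of the vertex `v` of `𝖷^*` under (the tree automorphism inducing) `f`. -/
noncomputable def wImage {X : ℕ → Type*} [∀ i, Nonempty (X i)]
    (f : Equiv.Perm (FBoundary X)) {m : ℕ} (v : FWord X m) : FWord X m :=
  fun i => f (wext v) i

/-- If `f|_v` is trivial for a beginning `v` of `w`, it is trivial for every longer beginning. -/
theorem RestrictTrivial.mono {X : ℕ → Type*} {f : Equiv.Perm (FBoundary X)} {w : FBoundary X}
    {m n : ℕ} (hmn : m ≤ n) (h : RestrictTrivial f (wprefix w m)) :
    RestrictTrivial f (wprefix w n) :=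
  fun w' hw' i hi => h w' (fun j => hw' (Fin.castLE hmn j)) i (hmn.trans hi)

theorem measurable_wprefix {X : ℕ → Type*} [∀ i, MeasurableSpace (X i)] (n : ℕ) :
    Measurable fun w : FBoundary X => wprefix w n :=
  measurable_pi_lambda _ fun i => measurable_pi_apply (i : ℕ)

theorem setOf_fextends {X : ℕ → Type*} {n : ℕ} (v : FWord X n) :
    {w : FBoundary X | FExtends w v} = (fun w => wprefix w n) ⁻¹' {v} := by
  ext w
  exact funext_iff.symm

/-- The measure of a union of cylinders over words of length `n` having the same measure `c`. -/
theorem measure_wprefix_preimage {X : ℕ → Type*} [∀ i, Finite (X i)]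
    [∀ i, MeasurableSpace (X i)] [∀ i, DiscreteMeasurableSpace (X i)]
    (μ : MeasureTheory.Measure (FBoundary X)) {n : ℕ} (S : Set (FWord X n)) (c : ENNReal)
    (h : ∀ v ∈ S, μ {w | FExtends w v} = c) :
    μ ((fun w => wprefix w n) ⁻¹' S) = S.ncard * c := by
  have hS : S.Finite := S.toFinite
  have hsum := MeasureTheory.sum_measure_preimage_singleton (μ := μ) hS.toFinset
    (f := fun w : FBoundary X => wprefix w n)
    fun v _ => measurable_wprefix n (MeasurableSet.singleton v)
  rw [hS.coe_toFinset] at hsum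
  rw [← hsum, Finset.sum_congr rfl fun v hv => by
    rw [← setOf_fextends, h v (hS.mem_toFinset.mp hv)], Finset.sum_const, nsmul_eq_mul,
    Set.ncard_eq_toFinset_card S hS]

open Filter MeasureTheory in
/-- **Proposition `pr:measureregular`.** Let `𝖷 = (X 0, X 1, …)` be a sequence of
nonempty finite sets, `T` a spherically homogeneous rooted subtree of `𝖷^*` and `g` an
automorphism of `𝖷^*`. Then `θ_{g,T}(n)/|L_n| → m_T(Σ_g ∩ ∂T)`, where `L_n` is the `n`-th
level of `T`, `Σ_g` is the set of `g`-singular points and `m_T` is the probability measure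
on `∂T` with `m_T(∂T_v) = 1/|L_n|` for every `v ∈ L_n`. -/
theorem stmt_3 (X : ℕ → Type*) [∀ i, Fintype (X i)] [∀ i, Nonempty (X i)]
    [∀ i, MeasurableSpace (X i)] [∀ i, DiscreteMeasurableSpace (X i)]
    -- `T` is a rooted subtree of `𝖷^*`, given by its level sets `T n ⊆ 𝖷^n`:
    (T : ∀ n, Set (FWord X n))
    (hroot : (fun i => i.elim0) ∈ T 0)
    (hsub : ∀ (n : ℕ) (v : FWord X (n + 1)), v ∈ T (n + 1) → wparent v ∈ T n)
    -- `T` is spherically homogeneous: the number of children depends only on the level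
    (hsph : ∃ d : ℕ → ℕ, ∀ n, ∀ v ∈ T n, {x : X n | wsnoc v x ∈ T (n + 1)}.ncard = d n)
    -- `g` is an automorphism of the tree `𝖷^*`
    (g : Equiv.Perm (FBoundary X)) (hg : IsTreeAut g)
    -- `μ` is the measure `m_T`: the probability measure concentrated on `∂T` with
    -- `μ(∂T_v) = 1/|L_n|` for every vertex `v` of the `n`-th level `L_n = T n` of `T`
    (μ : Measure (FBoundary X)) (hprob : IsProbabilityMeasure μ)
    (hμT : μ (boundaryOf T) = 1)
    (hμv : ∀ n, ∀ v ∈ T n, μ {w | FExtends w v} = 1 / ((T n).ncard : ENNReal)) :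
    Tendsto (fun n => (thetaRel g T n : ℝ) / ((T n).ncard : ℝ)) atTop
      (nhds (μ (singularSet g ∩ boundaryOf T)).toReal) := by
  let B : ℕ → Set (FBoundary X) := fun n =>
    (fun w => wprefix w n) ⁻¹' {v ∈ T n | ¬ RestrictTrivial g v}
  have hB_anti : Antitone B := antitone_nat_of_succ_le fun n w hw =>
    ⟨hsub n _ hw.1, fun h => hw.2 (h.mono n.le_succ)⟩
  have hB_inter : ⋂ n, B n = singularSet g ∩ boundaryOf T := by
    ext w
    simp only [Set.mem_iInter]
    exact ⟨fun h => ⟨fun n => (h n).2, fun n => (h n).1⟩, fun h n => ⟨h.2 n, h.1 n⟩⟩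
  have hB_lim : Tendsto (fun n => μ (B n)) atTop (nhds (μ (⋂ n, B n))) :=
    tendsto_measure_iInter_atTop
      (fun n => (measurable_wprefix n (Set.toFinite _).measurableSet).nullMeasurableSet)
      hB_anti ⟨0, measure_ne_top μ _⟩
  rw [hB_inter] at hB_lim
  refine ((ENNReal.tendsto_toReal (measure_ne_top μ _)).comp hB_lim).congr fun n => ?_
  have hBn : μ (B n) = thetaRel g T n * (1 / ((T n).ncard : ENNReal)) :=
    measure_wprefix_preimage μ _ _ fun v hv => hμv n v hv.1
  simp [hBn, div_eq_mul_inv]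
end

section
/- Let 𝖷 = (X_1, X_2, …) be a sequence of nonempty finite sets, let G be a finitely generated group of automorphisms of 𝖷^*, and let T ⊆ 𝖷^* be a G-invariant rooted subtree on which G acts level transitively. If every element of G is almost finitary on T, then every connected component of the Schreier graph of the action of G on ∂T is amenable. -/
/-- The sequence that starts with the finite word `v` and continues like `u`. -/
def wappend {X : ℕ → Type*} {n : ℕ} (v : FWord X n) (u : FBoundary X) : FBoundary X :=
  fun i => if h : i < n then v ⟨i, h⟩ else u i

lemma wappend_of_lt {X : ℕ → Type*} {n : ℕ} (v : FWord X n) (u : FBoundary X) {i : ℕ}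
    (h : i < n) : wappend v u i = v ⟨i, h⟩ := dif_pos h

lemma wappend_of_le {X : ℕ → Type*} {n : ℕ} (v : FWord X n) (u : FBoundary X) {i : ℕ}
    (h : n ≤ i) : wappend v u i = u i := dif_neg (Nat.not_lt.mpr h)

lemma wappend_left_injective {X : ℕ → Type*} {n : ℕ} (u : FBoundary X) :
    Function.Injective fun v : FWord X n => wappend v u := by
  intro v v' h
  funext i
  simpa [wappend_of_lt _ _ i.2] using congrFun h i

lemma apply_eq_wImage {X : ℕ → Type*} [∀ i, Nonempty (X i)] {f : Equiv.Perm (FBoundary X)}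
    (hf : IsTreeAut f) {n : ℕ} {v : FWord X n} {w : FBoundary X} (hw : FExtends w v)
    {i : ℕ} (hi : i < n) : f w i = wImage f v ⟨i, hi⟩ := by
  refine (hf n w (wext v)).1 (fun j hj => ?_) i hi
  simpa [wext, hj] using hw ⟨j, hj⟩

lemma extends_wappend {X : ℕ → Type*} {n : ℕ} (v : FWord X n) (u : FBoundary X) :
    FExtends (wappend v u) v := fun i => wappend_of_lt v u i.2

lemma RestrictTrivial.apply_wappend {X : ℕ → Type*} [∀ i, Nonempty (X i)]
    {f : Equiv.Perm (FBoundary X)} (hf : IsTreeAut f) {n : ℕ} {v : FWord X n}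
    (h : RestrictTrivial f v) (u : FBoundary X) :
    f (wappend v u) = wappend (wImage f v) u := by
  funext i
  rcases lt_or_ge i n with hi | hi
  · rw [apply_eq_wImage hf (extends_wappend v u) hi, wappend_of_lt _ _ hi]
  · rw [h _ (extends_wappend v u) i hi, wappend_of_le _ _ hi, wappend_of_le _ _ hi]

/-- Two words of length `n` are equivalent if some element of `G` moves one to the other
without changing the letters after the `n`-th one. -/
def tailSetoid {X : ℕ → Type*} (G : Subgroup (Equiv.Perm (FBoundary X))) (n : ℕ) :
    Setoid (FWord X n) where
  r v v' := ∃ g ∈ G, ∀ u, g (wappend v u) = wappend v' u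
  iseqv :=
    { refl := fun _ => ⟨1, G.one_mem, fun _ => rfl⟩
      symm := by
        rintro v v' ⟨g, hg, h⟩
        exact ⟨g⁻¹, G.inv_mem hg, fun u => by simp [← h u]⟩
      trans := by
        rintro v v' v'' ⟨g, hg, h⟩ ⟨k, hk, h'⟩
        exact ⟨k * g, G.mul_mem hk hg, fun u => by rw [Equiv.Perm.mul_apply, h, h']⟩ }

open scoped Classical in
/-- If a weight on a finite set has average less than `ε`, then so it has on some class of any
equivalence relation. -/
lemma exists_class_sum_lt {α : Type*} (r : Setoid α) (L : Finset α) (b : α → ℝ) (ε : ℝ)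
    (h : ∑ v ∈ L, b v < ε * L.card) :
    ∃ q : Quotient r, ∑ v ∈ L with (⟦v⟧ : Quotient r) = q, b v <
      ε * (L.filter fun v => (⟦v⟧ : Quotient r) = q).card := by
  have hmaps : ∀ v ∈ L, (⟦v⟧ : Quotient r) ∈ L.image fun v => (⟦v⟧ : Quotient r) :=
    fun v hv => Finset.mem_image_of_mem _ hv
  rw [← Finset.sum_fiberwise_of_maps_to hmaps, Finset.card_eq_sum_card_fiberwise hmaps,
    Nat.cast_sum, Finset.mul_sum] at h
  obtain ⟨q, -, hq⟩ := Finset.exists_lt_of_sum_lt h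
  exact ⟨q, hq⟩

open scoped Classical in
/-- Along almost finitary permutations, some level of the tree has few pairs `(v, s)` with
`s|_v ≠ id`. -/
lemma exists_level_sum_lt {X : ℕ → Type*} [∀ i, Fintype (X i)]
    (S : Finset (Equiv.Perm (FBoundary X))) (T : ∀ n, Set (FWord X n))
    (hT : ∀ n, (T n).Nonempty)
    (haf : ∀ s ∈ S, Filter.Tendsto (fun n => (thetaRel s T n : ℝ) / ((T n).ncard : ℝ))
      Filter.atTop (nhds 0)) {ε : ℝ} (hε : 0 < ε) :
    ∃ n, ∑ v ∈ (T n).toFinset, ((S.filter fun s => ¬ RestrictTrivial s v).card : ℝ) <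
      ε * (T n).toFinset.card := by
  have hlim := tendsto_finsetSum S haf
  rw [Finset.sum_const_zero] at hlim
  obtain ⟨n, hn⟩ := (hlim.eventually (gt_mem_nhds hε)).exists
  refine ⟨n, ?_⟩
  have hpos : (0 : ℝ) < (T n).ncard := by
    exact_mod_cast (Set.ncard_pos (Set.toFinite _)).2 (hT n)
  rw [← Finset.sum_div, div_lt_iff₀ hpos, Set.ncard_eq_toFinset_card'] at hn
  refine lt_of_eq_of_lt ?_ hn
  have hθ : ∀ s, thetaRel s T n =
      ((T n).toFinset.filter fun v => ¬ RestrictTrivial s v).card := by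
    intro s
    rw [thetaRel, Set.ncard_eq_toFinset_card']
    congr 1
    ext v
    simp
  simp only [hθ]
  exact_mod_cast Finset.sum_card_bipartiteAbove_eq_sum_card_bipartiteBelow
    (fun (v : FWord X n) (s : Equiv.Perm (FBoundary X)) => ¬ RestrictTrivial s v)

open Filter in
/-- **Proposition `pr:griamenable`.** Let `G` be a finitely generated group of
automorphisms of `𝖷^*` (generated by the finite symmetric set `S`) and let `T ⊆ 𝖷^*` be a
`G`-invariant rooted subtree on which `G` acts level transitively. If all elements of `G`
are almost finitary on `T`, then every connected component of the Schreier graph of the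
action of `(G, S)` on `∂T` is amenable: for every `w ∈ ∂T` and `ε > 0` there is a finite
nonempty Følner set `Fs` inside the component (= the `G`-orbit) of `w` whose set of
outgoing edges `(s, x)`, `s ∈ S`, `x ∈ Fs`, `s x ∉ Fs` has fewer than `ε·|Fs|` elements. -/
theorem stmt_4 (X : ℕ → Type*) [∀ i, Fintype (X i)] [∀ i, Nonempty (X i)]
    (G : Subgroup (Equiv.Perm (FBoundary X))) (hG : G ≤ treeAut X)
    (S : Finset (Equiv.Perm (FBoundary X))) (hSG : ∀ s ∈ S, s ∈ G)
    (hSsymm : ∀ s ∈ S, s⁻¹ ∈ S) (hSgen : Subgroup.closure (S : Set (Equiv.Perm (FBoundary X))) = G)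
    (T : ∀ n, Set (FWord X n))
    (hroot : (fun i => i.elim0) ∈ T 0)
    (hsub : ∀ (n : ℕ) (v : FWord X (n + 1)), v ∈ T (n + 1) → wparent v ∈ T n)
    (hinv : ∀ g ∈ G, ∀ (n : ℕ), ∀ v ∈ T n, wImage g v ∈ T n)
    (htrans : ∀ (n : ℕ), ∀ v ∈ T n, ∀ u ∈ T n, ∃ g ∈ G, wImage g v = u)
    -- every element of `G` is almost finitary on `T`
    (haf : ∀ g ∈ G,
      Tendsto (fun n => (thetaRel g T n : ℝ) / ((T n).ncard : ℝ)) atTop (nhds 0))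
    (w : FBoundary X) (hw : w ∈ boundaryOf T) (ε : ℝ) (hε : 0 < ε) :
    ∃ Fs : Set (FBoundary X), Fs.Finite ∧ Fs.Nonempty ∧
      (∀ x ∈ Fs, ∃ g ∈ G, g w = x) ∧
      (({p : Equiv.Perm (FBoundary X) × FBoundary X |
          p.1 ∈ S ∧ p.2 ∈ Fs ∧ p.1 p.2 ∉ Fs}.ncard : ℝ) < ε * Fs.ncard) := by
  classical
  obtain ⟨n, hn⟩ := exists_level_sum_lt S T (fun n => ⟨_, hw n⟩)
    (fun s hs => haf s (hSG s hs)) hε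
  obtain ⟨q, hq⟩ := exists_class_sum_lt (tailSetoid G n) _ _ ε hn
  set C := (T n).toFinset.filter fun v => (⟦v⟧ : Quotient (tailSetoid G n)) = q with hC
  have hmem : ∀ v, v ∈ C ↔ v ∈ T n ∧ (⟦v⟧ : Quotient (tailSetoid G n)) = q := by
    intro v; simp [hC]
  have hCne : C.Nonempty := by
    by_contra h
    simp [Finset.not_nonempty_iff_eq_empty.1 h] at hq
  obtain ⟨v, hv⟩ := hCne
  obtain ⟨g, hg, hgv⟩ := htrans n _ (hw n) v ((hmem v).1 hv).1
  have hx : wappend v (g w) = g w := by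
    funext i
    rcases lt_or_ge i n with hi | hi
    · rw [wappend_of_lt _ _ hi, ← hgv]
      exact (apply_eq_wImage (hG hg) (fun _ => rfl) hi).symm
    · exact wappend_of_le _ _ hi
  have hstep : ∀ c ∈ C, ∀ s ∈ S, RestrictTrivial s c → wImage s c ∈ C := by
    intro c hc s hs h
    rw [hmem] at hc ⊢
    refine ⟨hinv s (hSG s hs) n c hc.1, hc.2 ▸ (Quotient.sound ?_).symm⟩
    exact ⟨s, hSG s hs, h.apply_wappend (hG (hSG s hs))⟩
  refine ⟨(C.image fun c => wappend c (g w) : Finset _), Finset.finite_toSet _,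
    ⟨_, Finset.mem_coe.2 (Finset.mem_image_of_mem _ hv)⟩, ?_, ?_⟩
  · intro x hxF
    obtain ⟨c, hc, rfl⟩ := Finset.mem_image.1 (Finset.mem_coe.1 hxF)
    obtain ⟨k, hk, hkc⟩ := Quotient.exact (((hmem v).1 hv).2.trans ((hmem c).1 hc).2.symm)
    refine ⟨k * g, G.mul_mem hk hg, ?_⟩
    rw [Equiv.Perm.mul_apply, ← hkc, hx]
  · rw [Set.ncard_coe_finset, Finset.card_image_of_injective _ (wappend_left_injective _)]
    refine lt_of_le_of_lt ?_ hq
    rw [← Nat.cast_sum, ← Finset.card_sigma, Nat.cast_le]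
    refine le_trans ?_ (Finset.card_image_le (s := C.sigma fun v =>
      S.filter fun s => ¬ RestrictTrivial s v) (f := fun p => (p.2, wappend p.1 (g w))))
    rw [← Set.ncard_coe_finset]
    refine Set.ncard_le_ncard ?_ (Finset.finite_toSet _)
    rintro ⟨s, x⟩ ⟨hs, hxF, hsx⟩
    obtain ⟨c, hc, rfl⟩ := Finset.mem_image.1 (Finset.mem_coe.1 hxF)
    refine Finset.mem_coe.2 (Finset.mem_image.2 ⟨⟨c, s⟩, ?_, rfl⟩)
    refine Finset.mem_sigma.2 ⟨hc, Finset.mem_filter.2 ⟨hs, fun h => hsx ?_⟩⟩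
    refine Finset.mem_coe.2 (Finset.mem_image.2 ⟨_, hstep c hc s hs h, ?_⟩)
    exact (h.apply_wappend (hG (hSG s hs)) _).symm
end

section
/- Let 𝖷 = (X_1, X_2, …) be a sequence of nonempty finite sets with uniformly bounded cardinalities (i.e., there is M with |X_i| ≤ M for all i). Then the group of all bounded automorphisms of the tree 𝖷^* contains no free non-abelian subgroup. -/
/-- The restriction `f|_v` is finitary of depth at most `n`: `f|_{vu} = id` for every word
`u` of length `n` below `v`. -/
def FinitaryBelow {X : ℕ → Type*} (f : Equiv.Perm (FBoundary X)) {m : ℕ}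
    (v : FWord X m) (n : ℕ) : Prop :=
  ∀ w : FBoundary X, FExtends w v → ∀ i, m + n ≤ i → f w i = w i

/-- `f` is a bounded automorphism with set of directions `W` and finitary depth at most `n`:
whenever `v ∈ 𝖷^*` is not a beginning of any sequence in `W`, the restriction `f|_v` is
finitary of depth at most `n`. -/
def IsBoundedWith {X : ℕ → Type*} (f : Equiv.Perm (FBoundary X))
    (W : Set (FBoundary X)) (n : ℕ) : Prop :=
  ∀ (m : ℕ) (v : FWord X m), (∀ w ∈ W, ¬ FExtends w v) → FinitaryBelow f v n

/-- `f` is a bounded automorphism: it has a finite set of directions and a finitary depth. -/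
def IsBounded {X : ℕ → Type*} (f : Equiv.Perm (FBoundary X)) : Prop :=
  ∃ (W : Set (FBoundary X)) (n : ℕ), W.Finite ∧ IsBoundedWith f W n

/-! ### Free groups -/

/-- Two nontrivial commuting elements of a free group have a common nontrivial power. -/
lemma FreeGroup.exists_zpow_eq_zpow_of_commute {α : Type*} {a b : FreeGroup α}
    (h : Commute a b) (ha : a ≠ 1) (hb : b ≠ 1) :
    ∃ i j : ℤ, a ^ i = b ^ j ∧ a ^ i ≠ 1 := by
  set H : Subgroup (FreeGroup α) := Subgroup.closure {a, b}
  have hcomm : ∀ x y : H, x * y = y * x := by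
    have := Subgroup.isMulCommutative_closure (k := {a, b}) (by
      rintro x (rfl | rfl) y (rfl | rfl)
      exacts [rfl, h.eq, h.eq.symm, rfl])
    exact this.is_comm.comm
  let e := IsFreeGroup.toFreeGroup H
  have hsub : Subsingleton (IsFreeGroup.Generators H) := by
    refine ⟨fun x y => ?_⟩
    have hxy : FreeGroup.of x * FreeGroup.of y = FreeGroup.of y * FreeGroup.of x :=
      e.symm.injective (by rw [_root_.map_mul, _root_.map_mul, hcomm])
    classical
    by_contra hne
    have := congrArg FreeGroup.toWord hxy
    simp [FreeGroup.toWord_mul, FreeGroup.toWord_of, FreeGroup.reduce, hne] at this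
  have hcyc : ∃ c : FreeGroup (IsFreeGroup.Generators H), ∀ x, x ∈ Subgroup.zpowers c := by
    rcases isEmpty_or_nonempty (IsFreeGroup.Generators H) with hE | ⟨⟨x⟩⟩
    · exact ⟨1, fun x => by rw [Subsingleton.elim x 1]; exact one_mem _⟩
    · let _ : Unique (IsFreeGroup.Generators H) := ⟨⟨x⟩, fun y => Subsingleton.elim _ _⟩
      exact IsCyclic.exists_generator
  obtain ⟨c, hc⟩ := hcyc
  have key : ∀ x ∈ H, ∃ i : ℤ, (((e.symm c : H) : FreeGroup α)) ^ i = x := by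
    intro x hx
    obtain ⟨i, hi⟩ := hc (e ⟨x, hx⟩)
    refine ⟨i, ?_⟩
    have : e.symm c ^ i = ⟨x, hx⟩ := by
      apply e.injective
      simpa using hi
    simpa using congrArg Subtype.val this
  obtain ⟨i, hi⟩ := key a (Subgroup.subset_closure (by simp))
  obtain ⟨j, hj⟩ := key b (Subgroup.subset_closure (by simp))
  have hj0 : j ≠ 0 := by
    rintro rfl
    exact hb (by simpa using hj.symm)
  refine ⟨j, i, ?_, ?_⟩
  · rw [← hi, ← hj, ← zpow_mul, ← zpow_mul, mul_comm]
  · exact (IsMulTorsionFree.zpow_eq_one_iff_left hj0).not.2 ha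

/-- The isoperimetric inequality in the free group of rank two: if `B` contains all the points of
the finite set `A` that some letter moves out of `A`, then `|A| ≤ 2 |B|`. -/
lemma FreeGroup.card_le_two_mul_card_boundary (A B : Finset (FreeGroup (Fin 2)))
    (h : ∀ x ∈ A, ∀ s : Fin 2 × Bool, FreeGroup.mk [s] * x ∉ A → x ∈ B) :
    A.card ≤ 2 * B.card := by
  classical
  let k : FreeGroup (Fin 2) → Fin 2 := fun x =>
    if (x.toWord[0]?).map Prod.fst = some 0 then 1 else 0
  let f : FreeGroup (Fin 2) × Bool → FreeGroup (Fin 2) := fun p =>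
    FreeGroup.mk [(k p.1, p.2)] * p.1
  have hf : ∀ p, f p ∈ FreeGroup.startsWith (k p.1, p.2) := by
    intro p
    apply FreeGroup.startsWith_mk_mul
    intro hp
    simp only [FreeGroup.startsWith, Set.mem_ofPred_eq] at hp
    have hk : k p.1 = if some (k p.1) = some 0 then 1 else 0 := by
      conv_lhs => simp only [k]
      rw [hp, Option.map_some]
    revert hk
    generalize k p.1 = c
    revert c
    decide
  have hinj : Function.Injective f := by
    intro p q hpq
    have h1 := hf p
    have h2 := hf q
    rw [← hpq] at h2
    simp only [FreeGroup.startsWith, Set.mem_ofPred_eq] at h1 h2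
    have h3 : (k p.1, p.2) = (k q.1, q.2) := Option.some.inj (h1.symm.trans h2)
    have h4 : FreeGroup.mk [(k p.1, p.2)] * p.1 = FreeGroup.mk [(k q.1, q.2)] * q.1 := hpq
    rw [h3] at h4
    exact Prod.ext (mul_left_cancel h4) (Prod.mk.inj h3).2
  have hsub : (A ×ˢ (Finset.univ : Finset Bool)).image f ⊆
      A ∪ (B ×ˢ (Finset.univ : Finset Bool)).image f := by
    intro y hy
    obtain ⟨p, hp, rfl⟩ := Finset.mem_image.1 hy
    by_cases hA : f p ∈ A
    · exact Finset.mem_union_left _ hA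
    · refine Finset.mem_union_right _ (Finset.mem_image_of_mem _ ?_)
      simp only [Finset.mem_product, Finset.mem_univ, and_true] at hp ⊢
      exact h _ hp _ hA
  have hcard := (Finset.card_le_card hsub).trans (Finset.card_union_le _ _)
  rw [Finset.card_image_of_injective _ hinj, Finset.card_image_of_injective _ hinj] at hcard
  simp only [Finset.card_product, Finset.card_univ, Fintype.card_bool] at hcard
  omega

/-! ### Periodicity -/

/-- If the orbit of `u` under `f` meets at most `L` classes of an `f`-invariant equivalence
relation `R`, then `f ^ L!` maps `u` to an `R`-equivalent point. -/
lemma Equiv.Perm.rel_pow_factorial_apply {α β : Type*} [Fintype β] (f : Equiv.Perm α)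
    (R : α → α → Prop) (hR : Equivalence R) (hf : ∀ x y, R x y ↔ R (f x) (f y)) (u : α)
    (L : ℕ) (hL : Fintype.card β ≤ L) (p : α → β)
    (hp : ∀ i j : ℕ, p ((f ^ i) u) = p ((f ^ j) u) → R ((f ^ i) u) ((f ^ j) u)) :
    R u ((f ^ L.factorial) u) := by
  have hpow : ∀ (i : ℕ) x y, R x y ↔ R ((f ^ i) x) ((f ^ i) y) := by
    intro i
    induction i with
    | zero => simp
    | succ i ih =>
      intro x y
      rw [pow_succ', Equiv.Perm.mul_apply, Equiv.Perm.mul_apply, ← hf]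
      exact ih x y
  obtain ⟨i, j, hij, hj, hR'⟩ : ∃ i j : ℕ, i < j ∧ j ≤ L ∧ R ((f ^ i) u) ((f ^ j) u) := by
    obtain ⟨a, b, hne, hab⟩ := Fintype.exists_ne_map_eq_of_card_lt
      (fun i : Fin (L + 1) => p ((f ^ (i : ℕ)) u)) (by simpa using Nat.lt_succ_of_le hL)
    rcases lt_or_gt_of_ne hne with hlt | hlt
    · exact ⟨a, b, hlt, Nat.lt_succ_iff.1 b.2, hp _ _ hab⟩
    · exact ⟨b, a, hlt, Nat.lt_succ_iff.1 a.2, hp _ _ hab.symm⟩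
  have hd : R u ((f ^ (j - i)) u) := by
    rw [hpow i, ← Equiv.Perm.mul_apply, ← pow_add, Nat.add_sub_cancel' hij.le]
    exact hR'
  have hk : ∀ k : ℕ, R u ((f ^ ((j - i) * k)) u) := by
    intro k
    induction k with
    | zero => simpa using hR.refl u
    | succ k ih =>
      refine hR.trans hd ?_
      rw [Nat.mul_succ, add_comm, pow_add, Equiv.Perm.mul_apply, ← hpow]
      exact ih
  obtain ⟨k, hk'⟩ := Nat.dvd_factorial (Nat.sub_pos_of_lt hij) ((Nat.sub_le j i).trans hj)
  rw [hk']
  exact hk k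

/-! ### Bounded automorphisms -/

section Bounded

variable {X : ℕ → Type*}

lemma IsBoundedWith.mono {f : Equiv.Perm (FBoundary X)} {W W' : Set (FBoundary X)} {n n' : ℕ}
    (h : IsBoundedWith f W n) (hW : W ⊆ W') (hn : n ≤ n') : IsBoundedWith f W' n' :=
  fun m v hv w hw i hi => h m v (fun w' hw' => hv w' (hW hw')) w hw i (by omega)

/-- A finite family of bounded automorphisms has a common set of directions and a common
finitary depth. -/
lemma exists_isBoundedWith_of_finite {ι : Type*} [Fintype ι]
    {f : ι → Equiv.Perm (FBoundary X)} (hf : ∀ s, IsBounded (f s)) :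
    ∃ (W : Set (FBoundary X)) (n : ℕ), W.Finite ∧ ∀ s, IsBoundedWith (f s) W n := by
  choose W n hW hb using hf
  exact ⟨⋃ s, W s, Finset.univ.sup n, Set.finite_iUnion hW, fun s =>
    (hb s).mono (Set.subset_iUnion W s) (Finset.le_sup (Finset.mem_univ s))⟩

/-- Every point is separated from the other points of a finite set by a long enough beginning. -/
lemma exists_length_separating {W : Set (FBoundary X)} (hW : W.Finite) (u : FBoundary X) :
    ∃ m : ℕ, ∀ w ∈ W, (∀ i, i < m → w i = u i) → w = u := by
  induction W, hW using Set.Finite.induction_on with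
  | empty => exact ⟨0, by simp⟩
  | @insert a s _ _ ih =>
    obtain ⟨m, hm⟩ := ih
    by_cases ha : a = u
    · refine ⟨m, ?_⟩
      rintro w (rfl | hw) h
      exacts [ha, hm w hw h]
    · obtain ⟨k, hk⟩ := Function.ne_iff.1 ha
      refine ⟨max m (k + 1), ?_⟩
      rintro w (rfl | hw) h
      · exact absurd (h k (by omega)) hk
      · exact hm w hw fun i hi => h i (by omega)

lemma card_pi_fin_le {Y : ℕ → Type*} [∀ i, Fintype (Y i)] {M : ℕ}
    (hM : ∀ i, Fintype.card (Y i) ≤ M) (n : ℕ) : Fintype.card ((i : Fin n) → Y i) ≤ M ^ n := by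
  rw [Fintype.card_pi]
  simpa using Finset.prod_le_pow_card Finset.univ (fun i : Fin n => Fintype.card (Y i)) M
    (fun i _ => hM i)

lemma IsTreeAut.pow_apply_agree {f : Equiv.Perm (FBoundary X)} (hf : IsTreeAut f) (k n : ℕ)
    (w v : FBoundary X) :
    (∀ i, i < n → w i = v i) ↔ (∀ i, i < n → (f ^ k) w i = (f ^ k) v i) :=
  (treeAut X).pow_mem (x := f) hf k n w v

/-- Some positive power of a bounded automorphism fixing `w` is trivial on a neighborhood
of `w`. -/
lemma IsBounded.exists_pow_fix_near [∀ i, Fintype (X i)] {M : ℕ}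
    (hM : ∀ i, Fintype.card (X i) ≤ M) {f : Equiv.Perm (FBoundary X)} (hf : IsTreeAut f)
    (hb : IsBounded f) {w : FBoundary X} (hw : f w = w) :
    ∃ K m : ℕ, 0 < K ∧ ∀ u : FBoundary X, (∀ i, i < m → u i = w i) → (f ^ K) u = u := by
  classical
  obtain ⟨W, n, hWfin, hWn⟩ := hb
  obtain ⟨m₀, hm₀⟩ := exists_length_separating hWfin w
  have hfix : ∀ k : ℕ, (f ^ k) w = w := fun k => Equiv.Perm.pow_apply_eq_self_of_apply_eq_self hw k
  refine ⟨(M ^ (n + 1)).factorial, m₀, Nat.factorial_pos _, fun u hu => ?_⟩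
  by_cases huw : u = w
  · rw [huw, hfix]
  have hex : ∃ m, u m ≠ w m := Function.ne_iff.1 huw
  set m := Nat.find hex with hm
  have hlt : ∀ i, i < m → u i = w i := fun i hi => not_not.1 (Nat.find_min hex hi)
  have hne : u m ≠ w m := Nat.find_spec hex
  have hmm : m₀ ≤ m := by
    by_contra h
    exact hne (hu m (by omega))
  -- Points leaving `w` exactly at position `m` are changed only at the positions `m, …, m + n`.
  have step : ∀ x : FBoundary X, (∀ i, i < m → x i = w i) → x m ≠ w m →
      ∀ i, m + 1 + n ≤ i → f x i = x i := by
    intro x hx hxm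
    refine hWn (m + 1) (wprefix x (m + 1)) (fun w' hw' hext => ?_) x (fun i => rfl)
    have hext' : ∀ i, i < m + 1 → w' i = x i := fun i hi => hext ⟨i, hi⟩
    have hww' : w' = w := hm₀ w' hw' fun i hi =>
      (hext' i (by omega)).trans (hx i (by omega))
    exact hxm ((hww' ▸ hext' m (by omega)).symm)
  have hpow_lt : ∀ k : ℕ, ∀ i, i < m → (f ^ k) u i = w i := by
    intro k
    have := (hf.pow_apply_agree k m u w).1 hlt
    rwa [hfix] at this
  have hpow_ne : ∀ k : ℕ, (f ^ k) u m ≠ w m := by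
    intro k hk
    have : ∀ i, i < m + 1 → (f ^ k) u i = (f ^ k) w i := by
      intro i hi
      rw [hfix]
      rcases Nat.lt_succ_iff_lt_or_eq.1 hi with h | rfl
      exacts [hpow_lt k i h, hk]
    exact hne ((hf.pow_apply_agree k (m + 1) u w).2 this m (by omega))
  have hpow_ge : ∀ k : ℕ, ∀ i, m + 1 + n ≤ i → (f ^ k) u i = u i := by
    intro k
    induction k with
    | zero => simp
    | succ k ih =>
      intro i hi
      rw [pow_succ', Equiv.Perm.mul_apply, step _ (hpow_lt k) (hpow_ne k) i hi, ih i hi]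
  refine (Equiv.Perm.rel_pow_factorial_apply (β := (i : Fin (n + 1)) → X (m + i)) f Eq
    eq_equivalence (fun x y => f.injective.eq_iff.symm) u _
    (card_pi_fin_le (Y := fun i => X (m + i)) (fun i => hM _) (n + 1))
    (fun x i => x (m + i)) ?_).symm
  intro i j hij
  funext t
  rcases lt_or_ge t m with ht | ht
  · rw [hpow_lt i t ht, hpow_lt j t ht]
  rcases lt_or_ge t (m + 1 + n) with ht' | ht'
  · obtain ⟨d, rfl⟩ := Nat.exists_eq_add_of_le ht
    exact congrFun hij ⟨d, by omega⟩
  · exact (hpow_ge i t ht').trans (hpow_ge j t ht').symm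

/-- Some positive power of a tree automorphism acts trivially on the `N`-th level. -/
lemma IsTreeAut.exists_pow_fix_level [∀ i, Fintype (X i)] {f : Equiv.Perm (FBoundary X)}
    (hf : IsTreeAut f) (N : ℕ) :
    ∃ K : ℕ, 0 < K ∧ ∀ u : FBoundary X, ∀ i, i < N → (f ^ K) u i = u i := by
  classical
  refine ⟨(Fintype.card (FWord X N)).factorial, Nat.factorial_pos _, fun u i hi => ?_⟩
  refine (Equiv.Perm.rel_pow_factorial_apply f (fun x y => ∀ i, i < N → x i = y i)
    ⟨fun x i _ => rfl, fun h i hi => (h i hi).symm, fun h h' i hi => (h i hi).trans (h' i hi)⟩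
    (hf N) u _ le_rfl (fun x => wprefix x N) ?_ i hi).symm
  intro a b hab t ht
  exact congrFun hab ⟨t, ht⟩

/-- A free group of rank two acting by bounded automorphisms has no free orbit. -/
lemma exists_ne_one_fixing [∀ i, Fintype (X i)] {M : ℕ} (hM : ∀ i, Fintype.card (X i) ≤ M)
    (φ : FreeGroup (Fin 2) →* Equiv.Perm (FBoundary X)) (hφ : ∀ z, IsBounded (φ z))
    (w : FBoundary X) : ∃ g, g ≠ 1 ∧ φ g w = w := by
  classical
  by_contra! hfree
  set ψ : FreeGroup (Fin 2) → FBoundary X := fun x => φ x w with hψ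
  have hinj : Function.Injective ψ := by
    intro x y hxy
    by_contra hne
    refine hfree (y⁻¹ * x) (fun h => hne (inv_mul_eq_one.1 h).symm) ?_
    have hxy' : φ x w = φ y w := hxy
    rw [map_mul, Equiv.Perm.mul_apply, hxy', ← Equiv.Perm.mul_apply, ← map_mul]
    simp
  obtain ⟨W, n, hWfin, hWn⟩ := exists_isBoundedWith_of_finite
    (f := fun s : Fin 2 × Bool => φ (FreeGroup.mk [s])) fun s => hφ _
  have step : ∀ s x m, (∀ w' ∈ W, ¬ FExtends w' (wprefix (ψ x) m)) →
      ∀ i, m + n ≤ i → ψ (FreeGroup.mk [s] * x) i = ψ x i := by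
    intro s x m h i hi
    have := hWn s m _ h (ψ x) (fun _ => rfl) i hi
    simpa [hψ] using this
  set C := 2 * (hWfin.toFinset.card * M ^ n) with hC
  -- The set of points of the orbit with a prescribed tail has boundary of bounded size.
  have hA : ∀ (m : ℕ) (u : FBoundary X) (T : Finset (FreeGroup (Fin 2))),
      (∀ x ∈ T, ∀ i, m + n ≤ i → ψ x i = u i) → T.card ≤ C := by
    intro m u T hT
    have hfin : {x | ∀ i, m + n ≤ i → ψ x i = u i}.Finite := by
      refine Set.Finite.of_injOn (t := Set.univ) (f := fun x => wprefix (ψ x) (m + n))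
        (Set.mapsTo_univ _ _) ?_ Set.finite_univ
      intro x hx y hy hxy
      refine hinj (funext fun t => ?_)
      rcases lt_or_ge t (m + n) with ht | ht
      · exact congrFun hxy ⟨t, ht⟩
      · exact (hx t ht).trans (hy t ht).symm
    set A := hfin.toFinset with hAdef
    have hmemA : ∀ x, x ∈ A ↔ ∀ i, m + n ≤ i → ψ x i = u i := fun x => by
      simp [hAdef]
    have hTA : T ⊆ A := fun x hx => (hmemA x).2 (hT x hx)
    set B := A.filter fun x => ∃ w' ∈ W, FExtends w' (wprefix (ψ x) m) with hB
    have hAB : A.card ≤ 2 * B.card := by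
      refine FreeGroup.card_le_two_mul_card_boundary A B fun x hx s hs => ?_
      rw [hB, Finset.mem_filter]
      refine ⟨hx, ?_⟩
      by_contra! hno
      refine hs ((hmemA _).2 fun i hi => ?_)
      rw [step s x m hno i hi]
      exact (hmemA x).1 hx i hi
    have hBcard : B.card ≤ hWfin.toFinset.card * M ^ n := by
      have h1 : B.card ≤ ((hWfin.toFinset.image fun w' => wprefix w' m) ×ˢ
          (Finset.univ : Finset ((i : Fin n) → X (m + i)))).card := by
        refine Finset.card_le_card_of_injOn
          (fun x => (wprefix (ψ x) m, fun i : Fin n => ψ x (m + i))) ?_ ?_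
        · intro x hx
          obtain ⟨_, w', hw', hext⟩ := Finset.mem_filter.1 hx
          simp only [Finset.coe_product, Set.mem_prod, Finset.mem_coe, Finset.mem_image,
            Set.Finite.mem_toFinset, Finset.mem_univ, and_true]
          exact ⟨w', hw', funext hext⟩
        · intro x hx y hy hxy
          have hx' := (hmemA x).1 (Finset.mem_filter.1 hx).1
          have hy' := (hmemA y).1 (Finset.mem_filter.1 hy).1
          obtain ⟨h1, h2⟩ := Prod.mk.inj hxy
          refine hinj (funext fun t => ?_)
          rcases lt_or_ge t m with ht | ht
          · exact congrFun h1 ⟨t, ht⟩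
          rcases lt_or_ge t (m + n) with ht' | ht'
          · obtain ⟨d, rfl⟩ := Nat.exists_eq_add_of_le ht
            exact congrFun h2 ⟨d, by omega⟩
          · exact (hx' t ht').trans (hy' t ht').symm
      refine h1.trans ?_
      rw [Finset.card_product]
      exact Nat.mul_le_mul Finset.card_image_le
        (card_pi_fin_le (Y := fun i => X (m + i)) (fun i => hM _) n)
    have := Finset.card_le_card hTA
    omega
  -- Hence the cofinality classes of the orbit are finite.
  have hclass : ∀ x, {y | ∃ N, ∀ i, N ≤ i → ψ y i = ψ x i}.Finite := by
    intro x
    by_contra hinf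
    obtain ⟨T, hT, hcard⟩ := Set.Infinite.exists_subset_card_eq hinf (C + 1)
    choose! N hN using fun y (hy : y ∈ T) => hT hy
    have := hA (T.sup N) (ψ x) T fun y hy i hi =>
      hN y hy i ((Finset.le_sup hy).trans ((Nat.le_add_right _ _).trans hi))
    omega
  have hEfin : (ψ ⁻¹' W).Finite := hWfin.preimage hinj.injOn
  obtain ⟨T, hT⟩ := Infinite.exists_subset_card_eq (FreeGroup (Fin 2))
    (2 * hEfin.toFinset.card + 1)
  set U := T.biUnion fun t => (hclass t).toFinset with hU
  have hmemU : ∀ x, x ∈ U ↔ ∃ t ∈ T, ∃ N, ∀ i, N ≤ i → ψ x i = ψ t i := fun x => by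
    simp [hU]
  have hUcard : U.card ≤ 2 * hEfin.toFinset.card := by
    refine FreeGroup.card_le_two_mul_card_boundary U _ fun x hx s hs => ?_
    by_contra hxE
    have hxW : ψ x ∉ W := by simpa using hxE
    obtain ⟨m, hm⟩ := exists_length_separating hWfin (ψ x)
    obtain ⟨t, ht, N, hN⟩ := (hmemU x).1 hx
    refine hs ((hmemU _).2 ⟨t, ht, max N (m + n), fun i hi => ?_⟩)
    rw [step s x m ?_ i (by omega), hN i (by omega)]
    intro w' hw' hext
    exact hxW (hm w' hw' (fun i hi => hext ⟨i, hi⟩) ▸ hw')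
  have hTU : T ⊆ U := fun t ht => (hmemU t).2 ⟨t, ht, 0, fun _ _ => rfl⟩
  have := Finset.card_le_card hTU
  omega

end Bounded

/-- If a free group acts by tree automorphisms so that every boundary point has a neighborhood
on which some nontrivial element acts trivially, then the action is not faithful. -/
lemma not_injective_of_locally_fixing {X : ℕ → Type*} [∀ i, Fintype (X i)] {α : Type*}
    (φ : FreeGroup α →* Equiv.Perm (FBoundary X)) (hφ : ∀ z, IsTreeAut (φ z))
    (hloc : ∀ w : FBoundary X, ∃ (m : ℕ) (g : FreeGroup α), g ≠ 1 ∧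
      ∀ u : FBoundary X, (∀ i, i < m → u i = w i) → φ g u = u) (a : FreeGroup α) (ha : a ≠ 1) :
    ¬ Function.Injective φ := by
  classical
  intro hinj
  choose m g hg hfix using hloc
  obtain ⟨t, ht⟩ : ∃ t : Finset (FBoundary X),
      ∀ u : FBoundary X, ∃ w ∈ t, ∀ i, i < m w → u i = w i := by
    let _ : ∀ i, TopologicalSpace (X i) := fun _ => ⊥
    have : ∀ i, DiscreteTopology (X i) := fun _ => ⟨rfl⟩
    obtain ⟨t, -, ht⟩ := (isCompact_univ (X := FBoundary X)).elim_nhds_subcover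
      (fun w => (Set.Iio (m w)).pi fun i => {w i}) fun w _ =>
        set_pi_mem_nhds (Set.finite_Iio _) fun i _ => by simp
    refine ⟨t, fun u => ?_⟩
    obtain ⟨w, hw, hu⟩ := Set.mem_iUnion₂.1 (ht (Set.mem_univ u))
    exact ⟨w, hw, fun i hi => by simpa using hu i hi⟩
  set N := t.sup m
  -- A nontrivial element acting trivially on the `N`-th level and on the chosen cylinders.
  have key : ∀ s ⊆ t, ∃ h : FreeGroup α, h ≠ 1 ∧ (∀ u i, i < N → φ h u i = u i) ∧
      ∀ w ∈ s, ∀ u : FBoundary X, (∀ i, i < m w → u i = w i) → φ h u = u := by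
    intro s
    induction s using Finset.induction_on with
    | empty =>
      intro _
      obtain ⟨K, hK, hKfix⟩ := (hφ a).exists_pow_fix_level N
      refine ⟨a ^ K, (pow_eq_one_iff_left hK.ne').not.2 ha, fun u i hi => ?_, by simp⟩
      rw [map_pow]
      exact hKfix u i hi
    | insert w s _ ih =>
      intro hs
      obtain ⟨h, h1, hlevel, hh⟩ := ih ((Finset.subset_insert _ _).trans hs)
      obtain ⟨K, hK, hKfix⟩ := (hφ (g w)).exists_pow_fix_level N
      have hgK : g w ^ K ≠ 1 := (pow_eq_one_iff_left hK.ne').not.2 (hg w)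
      have hglevel : ∀ u i, i < N → φ (g w ^ K) u i = u i := by
        rw [map_pow]
        exact hKfix
      have hgfix : ∀ u : FBoundary X, (∀ i, i < m w → u i = w i) → φ (g w ^ K) u = u := by
        intro u hu
        rw [map_pow]
        exact Equiv.Perm.pow_apply_eq_self_of_apply_eq_self (hfix w u hu) K
      generalize g w ^ K = k at hgK hglevel hgfix
      have hmN : ∀ w' ∈ insert w s, m w' ≤ N := fun w' hw' => Finset.le_sup (hs hw')
      let P : Subgroup (FreeGroup α) :=
        { carrier := {z | ∀ u i, i < N → φ z u i = u i}
          one_mem' := by simp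
          mul_mem' := fun {x y} hx hy u i hi => by
            rw [map_mul, Equiv.Perm.mul_apply, hx _ i hi, hy u i hi]
          inv_mem' := fun {x} hx u i hi => by
            rw [← hx (φ x⁻¹ u) i hi, ← Equiv.Perm.mul_apply, ← map_mul]
            simp }
      let Q : FBoundary X → Subgroup (FreeGroup α) := fun w' =>
        { carrier := {z | ∀ u : FBoundary X, (∀ i, i < m w' → u i = w' i) → φ z u = u}
          one_mem' := by simp
          mul_mem' := fun {x y} hx hy u hu => by
            rw [map_mul, Equiv.Perm.mul_apply, hy u hu, hx u hu]
          inv_mem' := fun {x} hx u hu => by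
            rw [map_inv, Equiv.Perm.inv_eq_iff_eq, hx u hu] }
      have hconj : ∀ w' ∈ insert w s, ∀ x ∈ P, ∀ z ∈ Q w', x * z * x⁻¹ ∈ Q w' := by
        intro w' hw' x hx z hz u hu
        have hxu : φ z (φ x⁻¹ u) = φ x⁻¹ u := hz _ fun i hi =>
          (P.inv_mem hx u i (hi.trans_le (hmN w' hw'))).trans (hu i hi)
        rw [map_mul, map_mul, Equiv.Perm.mul_apply, Equiv.Perm.mul_apply, hxu,
          ← Equiv.Perm.mul_apply, ← map_mul]
        simp
      have hhP : h ∈ P := hlevel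
      have hkP : k ∈ P := hglevel
      have hhQ : ∀ w' ∈ s, h ∈ Q w' := hh
      have hkQ : k ∈ Q w := hgfix
      suffices ∃ z, z ≠ 1 ∧ z ∈ P ∧ ∀ w' ∈ insert w s, z ∈ Q w' from this
      by_cases hcomm : Commute h k
      · obtain ⟨i, j, hij, hne⟩ := FreeGroup.exists_zpow_eq_zpow_of_commute hcomm h1 hgK
        refine ⟨h ^ i, hne, P.zpow_mem hhP i, fun w' hw' => ?_⟩
        rcases Finset.mem_insert.1 hw' with rfl | hw''
        · rw [hij]
          exact (Q w').zpow_mem hkQ j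
        · exact (Q w').zpow_mem (hhQ w' hw'') i
      · refine ⟨h * k * h⁻¹ * k⁻¹, fun hone => hcomm ?_, P.mul_mem (P.mul_mem (P.mul_mem hhP hkP)
          (P.inv_mem hhP)) (P.inv_mem hkP), fun w' hw' => ?_⟩
        · exact mul_inv_eq_iff_eq_mul.1 (mul_inv_eq_one.1 hone)
        · rcases Finset.mem_insert.1 hw' with rfl | hw''
          · exact (Q w').mul_mem (hconj w' hw' h hhP k hkQ) ((Q w').inv_mem hkQ)
          · have := (Q w').mul_mem (hhQ w' hw'')
              (hconj w' hw' k hkP _ ((Q w').inv_mem (hhQ w' hw'')))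
            simpa only [mul_assoc] using this
  obtain ⟨h, h1, -, hh⟩ := key t subset_rfl
  refine h1 (hinj ?_)
  rw [map_one]
  ext1 u
  obtain ⟨w, hw, hu⟩ := ht u
  exact hh w hw u hu

/-- **Theorem `th:bounded`.** If the sizes of the alphabets `X i` are uniformly
bounded, then the group of bounded automorphisms of the spherically homogeneous tree `𝖷^*`
contains no free non-abelian subgroup: there is no injective homomorphism from the free
group of rank 2 whose image consists of bounded automorphisms. -/
theorem stmt_9 (X : ℕ → Type*) [∀ i, Fintype (X i)] [∀ i, Nonempty (X i)]
    (M : ℕ) (hM : ∀ i, Fintype.card (X i) ≤ M)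
    (φ : FreeGroup (Fin 2) →* Equiv.Perm (FBoundary X))
    (hφ : ∀ z, IsTreeAut (φ z) ∧ IsBounded (φ z)) :
    ¬ Function.Injective φ := by
  refine not_injective_of_locally_fixing φ (fun z => (hφ z).1) (fun w => ?_)
    (FreeGroup.of 0) (FreeGroup.of_ne_one 0)
  obtain ⟨g, hg, hgw⟩ := exists_ne_one_fixing hM φ (fun z => (hφ z).2) w
  obtain ⟨K, m, hK, hfix⟩ := (hφ g).2.exists_pow_fix_near hM (hφ g).1 hgw
  refine ⟨m, g ^ K, (pow_eq_one_iff_left hK.ne').not.2 hg, fun u hu => ?_⟩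
  rw [map_pow]
  exact hfix u hu
end

section
/- Let 𝖷 = (X_1, X_2, …) be a sequence of nonempty finite sets with |X_i| ≤ M for all i, let w ∈ 𝖷^ω, and let g be a bounded automorphism of 𝖷^* such that g fixes w and the set of directions of g is contained in {w}. Then g has finite order. -/
/-- A tree automorphism fixing `w` preserves the first level at which a sequence leaves `w`. -/
theorem IsTreeAut.firstDiff_of_fixed {X : ℕ → Type*} {g : Equiv.Perm (FBoundary X)}
    (hg : IsTreeAut g) {w u : FBoundary X} (hfix : g w = w) {k : ℕ}
    (hlt : ∀ i < k, u i = w i) (hk : u k ≠ w k) :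
    (∀ i < k, g u i = w i) ∧ g u k ≠ w k := by
  have key : ∀ m, (∀ i, i < m → u i = w i) ↔ ∀ i, i < m → g u i = w i := by
    intro m
    simpa only [hfix] using hg m u w
  refine ⟨(key k).1 hlt, fun h => hk ?_⟩
  refine (key (k + 1)).2 (fun i hi => ?_) k k.lt_succ_self
  rcases Nat.lt_succ_iff_lt_or_eq.1 hi with hi | rfl
  · exact (key k).1 hlt i hi
  · exact h

/-- If `g` fixes `w` and is bounded with the single direction `w`, then along the orbit of a
sequence leaving `w` at level `k` only the letters at the levels `k, …, k + n` can change. -/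
theorem IsBoundedWith.pow_apply {X : ℕ → Type*} {g : Equiv.Perm (FBoundary X)}
    (hg : IsTreeAut g) {w u : FBoundary X} (hfix : g w = w) {n : ℕ}
    (hn : IsBoundedWith g {w} n) {k : ℕ} (hlt : ∀ i < k, u i = w i) (hk : u k ≠ w k) (j : ℕ) :
    (∀ i < k, (g ^ j) u i = w i) ∧ (g ^ j) u k ≠ w k ∧
      ∀ i, k + 1 + n ≤ i → (g ^ j) u i = u i := by
  induction j with
  | zero => exact ⟨hlt, hk, fun _ _ => rfl⟩
  | succ j ih =>
    obtain ⟨h₁, h₂, h₃⟩ := ih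
    obtain ⟨h₄, h₅⟩ := hg.firstDiff_of_fixed hfix h₁ h₂
    rw [pow_succ', Equiv.Perm.mul_apply]
    refine ⟨h₄, h₅, fun i hi => ?_⟩
    rw [← h₃ i hi]
    refine hn (k + 1) (wprefix ((g ^ j) u) (k + 1)) ?_ _ (fun _ => rfl) i hi
    rintro _ rfl hext
    exact h₂ (hext (Fin.last k)).symm

/-- Under the same hypotheses, over alphabets with at most `M` letters, every orbit has length
at most `M ^ (n + 1)`. -/
theorem IsBoundedWith.exists_pow_apply_eq {X : ℕ → Type*} [∀ i, Fintype (X i)] {M : ℕ}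
    (hM : ∀ i, Fintype.card (X i) ≤ M) {g : Equiv.Perm (FBoundary X)}
    (hg : IsTreeAut g) {w : FBoundary X} (hfix : g w = w) {n : ℕ}
    (hn : IsBoundedWith g {w} n) {u : FBoundary X} (hu : u ≠ w) :
    ∃ p, 0 < p ∧ p ≤ M ^ (n + 1) ∧ (g ^ p) u = u := by
  classical
  have hex : ∃ k, u k ≠ w k := Function.ne_iff.1 hu
  obtain ⟨k, hk, hmin⟩ : ∃ k, u k ≠ w k ∧ ∀ i < k, u i = w i :=
    ⟨Nat.find hex, Nat.find_spec hex, fun i hi => not_not.1 (Nat.find_min hex hi)⟩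
  have horbit := hn.pow_apply hg hfix hmin hk
  have hcard : Fintype.card ((i : Fin (n + 1)) → X (k + i)) <
      Fintype.card (Fin (M ^ (n + 1) + 1)) := by
    rw [Fintype.card_pi, Fintype.card_fin, Nat.lt_succ_iff]
    simpa using Finset.prod_le_pow_card Finset.univ
      (fun i : Fin (n + 1) => Fintype.card (X (k + i))) M (fun i _ => hM _)
  obtain ⟨a, b, hab, heq⟩ := Fintype.exists_ne_map_eq_of_card_lt
    (fun (j : Fin (M ^ (n + 1) + 1)) (i : Fin (n + 1)) => (g ^ (j : ℕ)) u (k + i)) hcard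
  wlog hlt : a < b generalizing a b
  · exact this b a hab.symm heq.symm (lt_of_le_of_ne (not_lt.1 hlt) hab.symm)
  have hsame : (g ^ (a : ℕ)) u = (g ^ (b : ℕ)) u := by
    funext i
    rcases lt_or_ge i k with hi | hi
    · rw [(horbit a).1 i hi, (horbit b).1 i hi]
    rcases lt_or_ge i (k + 1 + n) with hi' | hi'
    · obtain ⟨d, rfl⟩ := Nat.exists_eq_add_of_le hi
      exact congrFun heq ⟨d, by omega⟩
    · rw [(horbit a).2.2 i hi', (horbit b).2.2 i hi']
  have hlt' : (a : ℕ) < b := hlt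
  refine ⟨b - a, by omega, by omega, (g ^ (a : ℕ)).injective ?_⟩
  rw [← Equiv.Perm.mul_apply, ← pow_add, Nat.add_sub_cancel' hlt'.le, hsame]

/-- Let `𝖷` be a sequence of nonempty finite alphabets with `|X i| ≤ M`
for all `i`, let `w ∈ 𝖷^ω` and let `g` be a bounded automorphism of `𝖷^*` fixing `w` whose
set of directions is contained in `{w}`. Then `g` has finite order. -/
theorem stmt_10 (X : ℕ → Type*) [∀ i, Fintype (X i)] [∀ i, Nonempty (X i)]
    (M : ℕ) (hM : ∀ i, Fintype.card (X i) ≤ M)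
    (g : Equiv.Perm (FBoundary X)) (hg : IsTreeAut g)
    (w : FBoundary X) (hfix : g w = w)
    (hbdd : ∃ n, IsBoundedWith g {w} n) :
    IsOfFinOrder g := by
  obtain ⟨n, hn⟩ := hbdd
  refine isOfFinOrder_iff_pow_eq_one.2 ⟨(M ^ (n + 1)).factorial, Nat.factorial_pos _, ?_⟩
  ext1 u
  obtain ⟨p, hp, hple, hpu⟩ : ∃ p, 0 < p ∧ p ≤ (M ^ (n + 1)) ∧ (g ^ p) u = u := by
    by_cases hu : u = w
    · have hM0 : 0 < M := Fintype.card_pos.trans_le (hM 0)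
      exact ⟨1, one_pos, Nat.one_le_pow _ _ hM0, by rw [pow_one, hu, hfix]⟩
    · exact hn.exists_pow_apply_eq hM hg hfix hu
  obtain ⟨c, hc⟩ := Nat.dvd_factorial hp hple
  rw [hc, pow_mul, Equiv.Perm.one_apply]
  exact Equiv.Perm.pow_apply_eq_self_of_apply_eq_self hpu c
end
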